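/- arXiv:2007.04946 — 2 statements merged into one kernel-verified Lean document; each statement's English description precedes it below -/
import Mathlib

section
/- Let X be a real Banach space with a normalized 1-unconditional basis (e_i)_{i∈ℕ} with biorthogonal functionals (e*_i)_{i∈ℕ}, and let x ∈ S_X. If every A ∈ M(x) is a finite set, then x is not a delta-point. -/
noncomputable section

variable {X : Type*} [NormedAddCommGroup X] [NormedSpace ℝ X]

/-- `(e, f)` is a normalized 1-unconditional basis of `X` with biorthogonal functionals `f`. -/
structure IsUncondBasis (e : ℕ → X) (f : ℕ → X →L[ℝ] ℝ) : Prop where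
  norm_e : ∀ i, ‖e i‖ = 1
  biorth : ∀ i j, f i (e j) = if i = j then (1 : ℝ) else 0
  expand : ∀ x : X, HasSum (fun i => f i x • e i) x
  signs : ∀ (x : X) (θ : ℕ → ℝ), (∀ i, θ i = 1 ∨ θ i = -1) →
    ∃ y : X, HasSum (fun i => θ i • f i x • e i) y ∧ ‖y‖ = ‖x‖

/-- The projection `P_A x = ∑_{i ∈ A} f i x • e i`. -/
def basisProj (e : ℕ → X) (f : ℕ → X →L[ℝ] ℝ) (A : Set ℕ) (x : X) : X :=
  ∑' i : A, f i x • e i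

/-- The family `M(x)` of minimal norm-giving subsets of the support of `x`. -/
def Mset (e : ℕ → X) (f : ℕ → X →L[ℝ] ℝ) (x : X) : Set (Set ℕ) :=
  {A | ‖basisProj e f A x‖ = ‖x‖ ∧ ∀ i ∈ A, ‖basisProj e f A x - f i x • e i‖ < ‖x‖}

/-- `Δ_ε(x)`: the set of elements of the closed unit ball that are at distance
at least `2 - ε` from `x`. -/
def deltaSet (x : X) (ε : ℝ) : Set X :=
  {y | ‖y‖ ≤ 1 ∧ 2 - ε ≤ ‖x - y‖}

/-- `x` is a delta-point if for every `ε > 0` the point `x` belongs to the closed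
convex hull of `Δ_ε(x)`. -/
def IsDeltaPoint (x : X) : Prop :=
  ∀ ε : ℝ, 0 < ε → x ∈ closure (convexHull ℝ (deltaSet x ε))

namespace IsUncondBasis

variable {e : ℕ → X} {f : ℕ → X →L[ℝ] ℝ}

theorem coord_of_hasSum (hb : IsUncondBasis e f) {c : ℕ → ℝ} {z : X}
    (hz : HasSum (fun i => c i • e i) z) (j : ℕ) : f j z = c j := by
  have h1 : HasSum (fun i => f j (c i • e i)) (f j z) := (f j).hasSum hz
  have h2 : HasSum (fun i => f j (c i • e i)) (f j (c j • e j)) :=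
    hasSum_single j fun i hi => by simp [hb.biorth, hi.symm]
  rw [h1.unique h2]
  simp [hb.biorth]

theorem coord_finsetSum (hb : IsUncondBasis e f) (B : Finset ℕ) (c : ℕ → ℝ) (j : ℕ) :
    f j (∑ i ∈ B, c i • e i) = if j ∈ B then c j else 0 := by
  simp [map_sum, hb.biorth]

theorem eq_of_coord_eq (hb : IsUncondBasis e f) {z w : X} (h : ∀ i, f i z = f i w) : z = w := by
  have hz := hb.expand z
  simp only [h] at hz
  exact hz.unique (hb.expand w)

/-- Flipping the sign of one coordinate preserves the norm. -/
theorem norm_flip (hb : IsUncondBasis e f) (u : X) (i : ℕ) :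
    ‖u - (2 * f i u) • e i‖ = ‖u‖ := by
  obtain ⟨y, hy, hn⟩ := hb.signs u (fun j => if j = i then -1 else 1) fun j => by
    by_cases h : j = i <;> simp [h]
  rw [← hn]
  congr 1
  refine hb.eq_of_coord_eq fun j => ?_
  simp only [smul_smul] at hy
  rw [hb.coord_of_hasSum hy j]
  by_cases h : j = i
  · subst h
    simp [hb.biorth]
    ring
  · simp [hb.biorth, h]

/-- Shrinking the modulus of one coordinate does not increase the norm. -/
theorem norm_add_smul_le (hb : IsUncondBasis e f) (u : X) (i : ℕ) {c : ℝ}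
    (hc : |f i u + c| ≤ |f i u|) : ‖u + c • e i‖ ≤ ‖u‖ := by
  by_cases h0 : f i u = 0
  · have : c = 0 := by simpa [h0] using hc
    simp [this]
  obtain ⟨t, rfl⟩ : ∃ t, c = -(t * (2 * f i u)) := ⟨-c / (2 * f i u), by field_simp⟩
  have hpos : 0 < |f i u| := abs_pos.mpr h0
  have ht : |1 - 2 * t| ≤ 1 := by
    have h1 : f i u + -(t * (2 * f i u)) = (1 - 2 * t) * f i u := by ring
    rw [h1, abs_mul] at hc
    exact le_of_mul_le_mul_right (by simpa using hc) hpos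
  rw [abs_le] at ht
  have hsplit : u + (-(t * (2 * f i u))) • e i
      = (1 - t) • u + t • (u - (2 * f i u) • e i) := by
    module
  calc ‖u + (-(t * (2 * f i u))) • e i‖
      ≤ ‖(1 - t) • u‖ + ‖t • (u - (2 * f i u) • e i)‖ := hsplit ▸ norm_add_le _ _
    _ = ‖u‖ := by
        rw [norm_smul, norm_smul, hb.norm_flip, Real.norm_of_nonneg (by linarith),
          Real.norm_of_nonneg (by linarith)]
        ring

/-- The norm is monotone in the moduli of the coordinates. -/
theorem norm_le_of_abs_coord_le (hb : IsUncondBasis e f) {z w : X}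
    (h : ∀ i, |f i z| ≤ |f i w|) : ‖z‖ ≤ ‖w‖ := by
  have hlim : HasSum (fun i => (f i z - f i w) • e i) (z - w) := by
    simpa only [sub_smul] using (hb.expand z).sub (hb.expand w)
  have htend := (hlim.const_add w).norm
  rw [add_sub_cancel] at htend
  refine le_of_tendsto' htend fun F => ?_
  induction F using Finset.induction_on with
  | empty => simp
  | insert i F hi ih =>
    rw [Finset.sum_insert hi, add_left_comm, add_comm]
    refine le_trans (hb.norm_add_smul_le _ i ?_) ih
    simpa [hb.coord_finsetSum F (fun j => f j z - f j w), hi] using h i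

/-- A finite set carrying the norm of `x` yields a functional norming `x` which is at most `1 / 2`
at the points whose coordinates on that set are far from those of `x`. -/
theorem exists_norming_functional (hb : IsUncondBasis e f) {x : X}
    {B : Finset ℕ} (hB : ‖∑ i ∈ B, f i x • e i‖ = 1) :
    ∃ g : X →L[ℝ] ℝ, g x = 1 ∧ (∀ y, ‖y‖ ≤ 1 → g y ≤ 1) ∧
      ∀ y, (∀ i ∈ B, |f i y| < |f i x - f i y|) → g y ≤ 1 / 2 := by
  obtain ⟨h, hh, hhx⟩ := exists_dual_vector ℝ (∑ i ∈ B, f i x • e i) (by simp [hB])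
  rw [hB] at hhx
  simp only [RCLike.ofReal_real_eq_id, id_eq] at hhx
  have hle : ∀ z, ‖z‖ ≤ 1 → h z ≤ 1 := fun z hz =>
    (le_abs_self _).trans ((h.le_opNorm z).trans (by rw [hh, one_mul]; exact hz))
  let g : X →L[ℝ] ℝ := ∑ i ∈ B, h (e i) • f i
  have hg : ∀ y, g y = h (∑ i ∈ B, f i y • e i) := fun y => by
    simp [g, map_sum, mul_comm]
  have hpos : ∀ i ∈ B, 0 ≤ f i x * h (e i) := fun i hi => by
    have h1 := hle (∑ i ∈ B, f i x • e i - (2 * f i x) • e i) (by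
      have h2 := hb.norm_flip (∑ i ∈ B, f i x • e i) i
      rw [hb.coord_finsetSum B (fun j => f j x), if_pos hi, hB] at h2
      exact h2.le)
    rw [map_sub, hhx, map_smul, smul_eq_mul] at h1
    linarith
  refine ⟨g, (hg x).trans hhx, fun y hy => ?_, fun y hy => ?_⟩
  · rw [hg]
    refine hle _ (le_trans (hb.norm_le_of_abs_coord_le fun i => ?_) hy)
    rw [hb.coord_finsetSum B (fun j => f j y)]
    split_ifs <;> simp
  · have hterm : ∀ i ∈ B, f i y * h (e i) ≤ 1 / 2 * (f i x * h (e i)) := fun i hi => by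
      have hsq := sq_lt_sq.mpr (hy i hi)
      have hxx : 0 < f i x * f i x := by
        refine mul_self_pos.mpr fun h0 => ?_
        simp [h0] at hsq
      have hp := hpos i hi
      refine le_of_mul_le_mul_left ?_ hxx
      nlinarith
    rw [map_sum] at hhx
    rw [hg, map_sum]
    simp only [map_smul, smul_eq_mul] at hhx ⊢
    calc ∑ i ∈ B, f i y * h (e i) ≤ ∑ i ∈ B, 1 / 2 * (f i x * h (e i)) :=
          Finset.sum_le_sum hterm
      _ = 1 / 2 := by rw [← Finset.mul_sum, hhx, mul_one]

variable [CompleteSpace X]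

theorem coord_basisProj (hb : IsUncondBasis e f) (A : Set ℕ) (x : X) (j : ℕ) :
    f j (basisProj e f A x) = A.indicator (fun i => f i x) j := by
  refine hb.coord_of_hasSum ?_ j
  have hsum : HasSum (A.indicator fun i => f i x • e i) (basisProj e f A x) :=
    hasSum_subtype_iff_indicator.mp ((hb.expand x).summable.subtype A).hasSum
  rwa [Set.indicator_smul_left] at hsum

theorem basisProj_coe_finset (hb : IsUncondBasis e f) (B : Finset ℕ) (x : X) :
    basisProj e f B x = ∑ i ∈ B, f i x • e i :=
  hb.eq_of_coord_eq fun j => by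
    classical
    rw [hb.coord_basisProj, hb.coord_finsetSum B (fun i => f i x)]
    simp [Set.indicator_apply]

theorem norm_basisProj_le (hb : IsUncondBasis e f) (A : Set ℕ) (x : X) :
    ‖basisProj e f A x‖ ≤ ‖x‖ :=
  hb.norm_le_of_abs_coord_le fun i => by
    classical
    rw [hb.coord_basisProj, Set.indicator_apply]
    split_ifs <;> simp

theorem basisProj_diff_singleton (hb : IsUncondBasis e f) {A : Set ℕ} (x : X) {i : ℕ}
    (hi : i ∈ A) : basisProj e f (A \ {i}) x = basisProj e f A x - f i x • e i :=
  hb.eq_of_coord_eq fun j => by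
    classical
    rw [map_sub, hb.coord_basisProj, hb.coord_basisProj]
    by_cases h : j = i
    · subst h
      simp [hb.biorth, hi]
    · simp [hb.biorth, h, Set.indicator_apply]

/-- The map `A ↦ P_A x` is continuous for the product topology on the subsets of `ℕ`. -/
theorem exists_finset_norm_basisProj_lt (hb : IsUncondBasis e f) (x : X) {δ : ℝ} (hδ : 0 < δ) :
    ∃ F : Finset ℕ, ∀ A B : Set ℕ, (∀ i ∈ F, i ∈ A ↔ i ∈ B) →
      ‖basisProj e f A x‖ < ‖basisProj e f B x‖ + δ := by
  obtain ⟨F, hF⟩ := ((hb.expand x).eventually (Metric.ball_mem_nhds x hδ)).exists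
  refine ⟨F, fun A B hAB => ?_⟩
  have hdiff : ‖basisProj e f A x - basisProj e f B x‖ ≤ ‖∑ i ∈ F, f i x • e i - x‖ := by
    refine hb.norm_le_of_abs_coord_le fun j => ?_
    classical
    rw [map_sub, map_sub, hb.coord_basisProj, hb.coord_basisProj,
      hb.coord_finsetSum F (fun i => f i x)]
    by_cases hj : j ∈ F
    · simp [Set.indicator_apply, hAB j hj]
    · by_cases h1 : j ∈ A <;> by_cases h2 : j ∈ B <;> simp [h1, h2, hj]
  have hlt : ‖∑ i ∈ F, f i x • e i - x‖ < δ := by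
    simpa [dist_eq_norm] using hF
  linarith [norm_sub_norm_le (basisProj e f A x) (basisProj e f B x)]

/-- Every set carrying the norm of `x` contains a member of `M(x)`. -/
theorem exists_Mset_subset (hb : IsUncondBasis e f) {x : X} {A : Set ℕ}
    (hA : ‖basisProj e f A x‖ = ‖x‖) : ∃ B ∈ Mset e f x, B ⊆ A := by
  obtain ⟨B, hBA, hB⟩ := zorn_superset_nonempty {A : Set ℕ | ‖basisProj e f A x‖ = ‖x‖}
    (fun c hc hchain hne => by
      refine ⟨⋂₀ c, ?_, fun s hs => Set.sInter_subset_of_mem hs⟩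
      refine le_antisymm (hb.norm_basisProj_le _ _) (le_of_forall_pos_lt_add fun δ hδ => ?_)
      obtain ⟨F, hF⟩ := hb.exists_finset_norm_basisProj_lt x hδ
      obtain ⟨s, hs, hsF⟩ : ∃ s ∈ c, ∀ i ∈ F, i ∈ s → i ∈ ⋂₀ c := by
        clear hF
        induction F using Finset.induction_on with
        | empty => exact ⟨hne.some, hne.some_mem, by simp⟩
        | insert i F _ ih =>
          obtain ⟨s, hs, hsF⟩ := ih
          by_cases hi : i ∈ ⋂₀ c
          · refine ⟨s, hs, fun j hj hjs => ?_⟩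
            rcases Finset.mem_insert.mp hj with rfl | hj
            · exact hi
            · exact hsF j hj hjs
          · obtain ⟨t, ht, hit⟩ : ∃ t ∈ c, i ∉ t := by simpa using hi
            rcases hchain.total hs ht with hst | hts
            · refine ⟨s, hs, fun j hj hjs => ?_⟩
              rcases Finset.mem_insert.mp hj with rfl | hj
              · exact absurd (hst hjs) hit
              · exact hsF j hj hjs
            · refine ⟨t, ht, fun j hj hjt => ?_⟩
              rcases Finset.mem_insert.mp hj with rfl | hj
              · exact absurd hjt hit
              · exact hsF j hj (hts hjt)
      rw [← (hc hs : ‖basisProj e f s x‖ = ‖x‖)]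
      exact hF s _ fun i hi => ⟨hsF i hi, fun h => h s hs⟩) A hA
  refine ⟨B, ⟨hB.prop, fun i hi => ?_⟩, hBA⟩
  rw [← hb.basisProj_diff_singleton x hi]
  refine lt_of_le_of_ne (hb.norm_basisProj_le _ _) fun heq => ?_
  exact (hB.le_of_le (y := B \ {i}) heq Set.sdiff_subset hi).2 rfl

/-- If the members of `M(x)` are finite, then finitely many finite sets carrying the norm of `x`
suffice to detect all sets that almost carry it. -/
theorem exists_finite_norming_family (hb : IsUncondBasis e f) {x : X}
    (hfin : ∀ A ∈ Mset e f x, A.Finite) :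
    ∃ (T : Finset (Finset ℕ)) (ε : ℝ), 0 < ε ∧
      (∀ B ∈ T, ‖∑ i ∈ B, f i x • e i‖ = ‖x‖) ∧
      ∀ A : Set ℕ, ‖x‖ - ε ≤ ‖basisProj e f A x‖ → ∃ B ∈ T, ↑B ⊆ A := by
  have key : ∃ (T : Finset (Finset ℕ)) (ε : ℝ), 0 < ε ∧
      (∀ B ∈ T, ‖∑ i ∈ B, f i x • e i‖ = ‖x‖) ∧
      ∀ s ∈ (Set.univ : Set (ℕ → Bool)),
        ‖x‖ - ε ≤ ‖basisProj e f {i | s i = true} x‖ → ∃ B ∈ T, ∀ i ∈ B, s i = true := by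
    refine isCompact_univ.induction_on (p := fun S : Set (ℕ → Bool) =>
      ∃ (T : Finset (Finset ℕ)) (ε : ℝ), 0 < ε ∧
        (∀ B ∈ T, ‖∑ i ∈ B, f i x • e i‖ = ‖x‖) ∧
        ∀ s ∈ S, ‖x‖ - ε ≤ ‖basisProj e f {i | s i = true} x‖ →
          ∃ B ∈ T, ∀ i ∈ B, s i = true) ?_ ?_ ?_ ?_
    · exact ⟨∅, 1, one_pos, by simp, by simp⟩
    · rintro S S' hSS' ⟨T, ε, hε, hT, h⟩
      exact ⟨T, ε, hε, hT, fun s hs => h s (hSS' hs)⟩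
    · rintro S S' ⟨T, ε, hε, hT, h⟩ ⟨T', ε', hε', hT', h'⟩
      refine ⟨T ∪ T', min ε ε', lt_min hε hε', fun B hB => ?_, ?_⟩
      · exact (Finset.mem_union.mp hB).elim (hT B) (hT' B)
      · rintro s (hs | hs) hle
        · obtain ⟨B, hB, hBs⟩ := h s hs (by linarith [min_le_left ε ε'])
          exact ⟨B, Finset.mem_union_left _ hB, hBs⟩
        · obtain ⟨B, hB, hBs⟩ := h' s hs (by linarith [min_le_right ε ε'])
          exact ⟨B, Finset.mem_union_right _ hB, hBs⟩
    · intro s _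
      rw [nhdsWithin_univ]
      have hagree : ∀ F : Finset ℕ, {s' : ℕ → Bool | ∀ i ∈ F, s' i = s i} ∈ nhds s := fun F =>
        (Filter.eventually_all_finset F).mpr fun i _ =>
          (continuous_apply i).continuousAt.eventually
            ((isOpen_discrete {s i}).mem_nhds rfl)
      by_cases hs : ‖basisProj e f {i | s i = true} x‖ = ‖x‖
      · obtain ⟨B, hB, hBs⟩ := hb.exists_Mset_subset hs
        lift B to Finset ℕ using hfin B hB
        refine ⟨_, hagree B, {B}, 1, one_pos, ?_, fun s' hs' _ => ⟨B, by simp, fun i hi => ?_⟩⟩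
        · simpa [hb.basisProj_coe_finset] using hB.1
        · rw [hs' i hi]
          exact hBs hi
      · have hlt := lt_of_le_of_ne (hb.norm_basisProj_le _ _) hs
        have hδ : 0 < (‖x‖ - ‖basisProj e f {i | s i = true} x‖) / 2 := by linarith
        obtain ⟨F, hF⟩ := hb.exists_finset_norm_basisProj_lt x hδ
        refine ⟨_, hagree F, ∅, _, hδ, by simp, fun s' hs' hle => ?_⟩
        have := hF {i | s' i = true} {i | s i = true} fun i hi => by simp [hs' i hi]
        linarith
  obtain ⟨T, ε, hε, hT, h⟩ := key
  refine ⟨T, ε, hε, hT, fun A hA => ?_⟩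
  classical
  obtain ⟨B, hB, hBA⟩ := h (fun i => decide (i ∈ A)) trivial (by simpa using hA)
  exact ⟨B, hB, fun i hi => by simpa using hBA i hi⟩

/-- The distance of `x` to `y` is controlled by the coordinates where `y` is far from `x`. -/
theorem norm_sub_le_norm_basisProj_add (hb : IsUncondBasis e f) (x y : X) :
    ‖x - y‖ ≤ ‖basisProj e f {i | |f i y| < |f i x - f i y|} x‖ + ‖y‖ := by
  set A : Set ℕ := {i | |f i y| < |f i x - f i y|} with hA
  have h : ‖x - y - basisProj e f A x‖ ≤ ‖y‖ := by
    refine hb.norm_le_of_abs_coord_le fun i => ?_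
    rw [map_sub, map_sub, hb.coord_basisProj]
    by_cases hi : i ∈ A
    · simp [hi]
    · simpa [hi] using (not_lt.mp hi : |f i x - f i y| ≤ |f i y|)
  linarith [norm_le_norm_add_norm_sub' (x - y) (basisProj e f A x)]

end IsUncondBasis

/-- Let `x` be in the unit sphere of a Banach space with a normalized 1-unconditional
basis. If every member of `M(x)` is finite, then `x` is not a delta-point. -/
theorem not_deltaPoint_of_Mset_finite [CompleteSpace X] (e : ℕ → X) (f : ℕ → X →L[ℝ] ℝ)
    (hb : IsUncondBasis e f) (x : X) (hx : ‖x‖ = 1)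
    (hfin : ∀ A ∈ Mset e f x, A.Finite) : ¬ IsDeltaPoint x := by
  intro hdelta
  obtain ⟨T, ε, hε, hT, hcover⟩ := hb.exists_finite_norming_family hfin
  have hg : ∀ B : Finset ℕ, ∃ g : X →L[ℝ] ℝ, B ∈ T → g x = 1 ∧ (∀ y, ‖y‖ ≤ 1 → g y ≤ 1) ∧
      ∀ y, (∀ i ∈ B, |f i y| < |f i x - f i y|) → g y ≤ 1 / 2 := fun B => by
    by_cases hB : B ∈ T
    · obtain ⟨g, hg⟩ := hb.exists_norming_functional ((hT B hB).trans hx)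
      exact ⟨g, fun _ => hg⟩
    · exact ⟨0, fun h => absurd h hB⟩
  choose g hg using hg
  let G : X →L[ℝ] ℝ := ∑ B ∈ T, g B
  have hGx : G x = T.card := by
    simp only [G, _root_.sum_apply]
    rw [Finset.sum_congr rfl fun B hB => (hg B hB).1]
    simp
  have hsub : deltaSet x ε ⊆ {y | G y ≤ T.card - 1 / 2} := by
    rintro y ⟨hy1, hy2⟩
    obtain ⟨B, hB, hBA⟩ := hcover {i | |f i y| < |f i x - f i y|} (by
      linarith [hb.norm_sub_le_norm_basisProj_add x y])
    have hBy := (hg B hB).2.2 y fun i hi => hBA hi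
    have hrest : ∑ C ∈ T.erase B, g C y ≤ (T.erase B).card := by
      simpa using Finset.sum_le_card_nsmul (T.erase B) (fun C => g C y) 1
        fun C hC => (hg C (Finset.mem_of_mem_erase hC)).2.1 y hy1
    have hcard : ((T.erase B).card : ℝ) + 1 = T.card := by
      exact_mod_cast Finset.card_erase_add_one hB
    have hsum := Finset.add_sum_erase T (fun C => g C y) hB
    simp only [Set.mem_ofPred_eq, G, _root_.sum_apply]
    linarith
  have hconv : Convex ℝ {y | G y ≤ T.card - 1 / 2} :=
    convex_halfSpace_le G.isLinear _
  have hclosed : IsClosed {y | G y ≤ T.card - 1 / 2} :=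
    isClosed_le G.continuous continuous_const
  have hmem : G x ≤ T.card - 1 / 2 :=
    closure_minimal (convexHull_min hsub hconv) hclosed (hdelta ε hε)
  linarith
end
end

section
/- Let X be a real Banach space with a normalized subsymmetric basis (e_i)_{i∈ℕ}. Then no point of S_X is a delta-point. -/
noncomputable section

variable {X : Type*} [NormedAddCommGroup X] [NormedSpace ℝ X]

/-- `(e, f)` is a normalized subsymmetric basis: a 1-unconditional basis such that
moreover spreading the coefficients of any `x` along any strictly increasing sequence
(with any choice of signs) gives a summable family whose sum has the same norm as `x`. -/
structure IsSubsymmetricBasis (e : ℕ → X) (f : ℕ → X →L[ℝ] ℝ)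
    extends IsUncondBasis e f : Prop where
  subsym : ∀ (x : X) (θ : ℕ → ℝ) (k : ℕ → ℕ), (∀ i, θ i = 1 ∨ θ i = -1) → StrictMono k →
    ∃ y : X, HasSum (fun i => θ i • f i x • e (k i)) y ∧ ‖y‖ = ‖x‖

/-- The part of `x` supported on `B ∪ [n, ∞)`, provided that `B ⊆ [0, n)`. -/
def headTail (e : ℕ → X) (f : ℕ → X →L[ℝ] ℝ) (x : X) (B : Finset ℕ) (n : ℕ) : X :=
  (∑ i ∈ B, f i x • e i) + (x - ∑ i ∈ Finset.range n, f i x • e i)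

namespace IsUncondBasis

variable {e : ℕ → X} {f : ℕ → X →L[ℝ] ℝ}

theorem coord_sum (hb : IsUncondBasis e f) (s : Finset ℕ) (c : ℕ → ℝ) (i : ℕ) :
    f i (∑ j ∈ s, c j • e j) = if i ∈ s then c i else 0 := by
  simp [map_sum, hb.biorth]

/-- Multiplying one coordinate by a number of modulus at most one does not increase the norm. -/
theorem norm_update_le (hb : IsUncondBasis e f) (x : X) (i : ℕ) (c : ℝ) (hc : |c| ≤ |f i x|) :
    ‖x + (c - f i x) • e i‖ ≤ ‖x‖ := by
  have hflip : ‖x - (2 * f i x) • e i‖ = ‖x‖ := by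
    obtain ⟨y, hy, hyx⟩ := hb.signs x (fun j => if j = i then -1 else 1)
      (fun j => by by_cases h : j = i <;> simp [h])
    have hsingle : HasSum (fun j => if j = i then (2 * f i x) • e i else 0)
        ((2 * f i x) • e i) := hasSum_ite_eq i _
    have hsub := (hb.expand x).sub hsingle
    have hfun : (fun j => f j x • e j - if j = i then (2 * f i x) • e i else 0) =
        fun j => (if j = i then (-1 : ℝ) else 1) • f j x • e j := by
      funext j
      by_cases h : j = i
      · subst h
        simp only [if_true]
        module
      · simp [h]
    rw [hfun] at hsub
    rw [hsub.unique hy, hyx]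
  rcases eq_or_ne (f i x) 0 with h0 | h0
  · have : c = 0 := by simpa [h0] using hc
    simp [h0, this]
  · obtain ⟨t, rfl⟩ : ∃ t, c = t * f i x := ⟨c / f i x, by field_simp⟩
    have ht : |t| ≤ 1 := by
      rw [abs_mul] at hc
      exact le_of_mul_le_mul_right (by linarith) (abs_pos.mpr h0)
    obtain ⟨ht1, ht2⟩ := abs_le.mp ht
    have hconv : x + (t * f i x - f i x) • e i =
        ((1 + t) / 2) • x + ((1 - t) / 2) • (x - (2 * f i x) • e i) := by module
    rw [hconv]
    refine (norm_add_le _ _).trans ?_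
    rw [norm_smul, norm_smul, hflip, Real.norm_of_nonneg (by linarith),
      Real.norm_of_nonneg (by linarith)]
    linarith

/-- The norm is monotone in the moduli of the coordinates. -/
theorem norm_mono (hb : IsUncondBasis e f) {w x : X} (h : ∀ i, |f i w| ≤ |f i x|) :
    ‖w‖ ≤ ‖x‖ := by
  have hfin (s : Finset ℕ) : ‖x + ∑ i ∈ s, (f i w - f i x) • e i‖ ≤ ‖x‖ := by
    induction s using Finset.induction_on with
    | empty => simp
    | insert i s hi ih =>
      have hcoord : f i (x + ∑ j ∈ s, (f j w - f j x) • e j) = f i x := by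
        rw [map_add, hb.coord_sum]
        simp [hi]
      have hstep := hb.norm_update_le (x + ∑ j ∈ s, (f j w - f j x) • e j) i (f i w)
        (by rw [hcoord]; exact h i)
      rw [hcoord] at hstep
      rw [Finset.sum_insert hi, add_comm ((f i w - f i x) • e i), ← add_assoc]
      exact hstep.trans ih
  have hlim : HasSum (fun i => (f i w - f i x) • e i) (w - x) := by
    simpa only [sub_smul] using (hb.expand w).sub (hb.expand x)
  have hadd : Filter.Tendsto (fun s : Finset ℕ => ‖x + ∑ i ∈ s, (f i w - f i x) • e i‖)
      Filter.atTop (nhds ‖x + (w - x)‖) := (Filter.Tendsto.const_add x hlim).norm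
  rw [add_sub_cancel] at hadd
  exact le_of_tendsto' hadd hfin

theorem abs_coord_le (hb : IsUncondBasis e f) (x : X) (i : ℕ) : |f i x| ≤ ‖x‖ := by
  have h := hb.norm_mono (w := f i x • e i) (x := x) fun j => by
    by_cases hji : j = i <;> simp [hb.biorth, hji]
  simpa [norm_smul, hb.norm_e] using h

/-- A nonzero vector has a coordinate that strictly dominates all later ones. -/
theorem exists_dominating_coord (hb : IsUncondBasis e f) {x : X} (hx : x ≠ 0) :
    ∃ i, ∀ j, i < j → |f j x| < |f i x| := by
  obtain ⟨n, hn⟩ : ∃ n, f n x ≠ 0 := by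
    by_contra! h
    refine hx ((hb.expand x).unique ?_)
    simp [h, hasSum_zero]
  have htend : Filter.Tendsto (fun j => |f j x|) Filter.atTop (nhds 0) := by
    simpa [norm_smul, hb.norm_e] using (hb.expand x).summable.tendsto_atTop_zero.norm
  obtain ⟨N, hN⟩ := Filter.eventually_atTop.mp (htend.eventually_lt_const (abs_pos.mpr hn))
  have hfin : {j | |f n x| ≤ |f j x|}.Finite :=
    (Set.finite_lt_nat N).subset fun j hj => by
      by_contra hjN
      exact absurd (hN j (not_lt.mp hjN)) (not_lt.mpr hj)
  obtain ⟨i, hi, hmax⟩ := hfin.exists_maximal ⟨n, le_refl |f n x|⟩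
  refine ⟨i, fun j hij => lt_of_lt_of_le ?_ hi⟩
  by_contra hj
  exact absurd (hmax (not_lt.mp hj) hij.le) (not_le.mpr hij)

theorem coord_headTail (hb : IsUncondBasis e f) (x : X) {B : Finset ℕ} {n : ℕ}
    (hB : ∀ i ∈ B, i < n) (i : ℕ) :
    f i (headTail e f x B n) = if i ∈ B ∨ n ≤ i then f i x else 0 := by
  rw [headTail, map_add, map_sub, hb.coord_sum B (fun i => f i x),
    hb.coord_sum (Finset.range n) (fun i => f i x)]
  by_cases hi : i ∈ B
  · simp [hi, hB i hi]
  · by_cases hn : n ≤ i <;> simp [hi, hn, not_lt.mpr, not_le.mp]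

theorem tendsto_headTail (hb : IsUncondBasis e f) (x : X) (B : Finset ℕ) :
    Filter.Tendsto (headTail e f x B) Filter.atTop (nhds (∑ i ∈ B, f i x • e i)) := by
  have h := ((hb.expand x).tendsto_sum_nat.const_sub x).const_add (∑ i ∈ B, f i x • e i)
  rwa [sub_self, add_zero] at h

/-- If `y` is almost at distance two from `x`, then `x` almost attains its norm on the set where
`y` stays below `x / 2`. -/
theorem norm_sub_le_headTail (hb : IsUncondBasis e f) (x y : X) {B : Finset ℕ} {n : ℕ}
    (hB : ∀ i ∈ B, i < n) (h : ∀ i < n, i ∉ B → f i x ^ 2 / 2 ≤ f i y * f i x) :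
    ‖x - y‖ ≤ ‖x‖ / 2 + ‖headTail e f x B n‖ / 2 + ‖y‖ := by
  obtain ⟨v, hv, hvy⟩ := hb.signs y (fun i => if 0 ≤ f i y * f i x then 1 else -1)
    (fun i => by by_cases hi : 0 ≤ f i y * f i x <;> simp [hi])
  have hcoordv (i : ℕ) : f i v = (if 0 ≤ f i y * f i x then 1 else -1) * f i y := by
    refine (hv.mapL (f i)).unique ?_
    convert hasSum_ite_eq i ((if 0 ≤ f i y * f i x then 1 else -1) * f i y) using 2 with j
    by_cases hj : j = i
    · subst hj; simp only [map_smul, hb.biorth, smul_eq_mul, if_true, mul_one]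
    · simp only [map_smul, hb.biorth, smul_eq_mul, hj, Ne.symm hj, if_false, mul_zero]
  have hmono := hb.norm_mono (w := x - y)
    (x := (1 / 2 : ℝ) • x + (1 / 2 : ℝ) • headTail e f x B n + v) fun i => by
      simp only [map_add, map_sub, map_smul, smul_eq_mul, hcoordv, hb.coord_headTail x hB]
      have hh := h i
      generalize f i x = a at *
      generalize f i y = b at *
      by_cases hi : i ∈ B ∨ n ≤ i
      · rw [if_pos hi]
        split_ifs with hs
        · refine sq_le_sq.mp ?_
          nlinarith
        · refine sq_le_sq.mp ?_
          nlinarith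
      · rw [if_neg hi]
        push Not at hi
        have hab := hh hi.2 hi.1
        rw [if_pos (by nlinarith [sq_nonneg a])]
        refine sq_le_sq.mp ?_
        nlinarith
  refine hmono.trans ((norm_add_le _ _).trans ?_)
  rw [hvy]
  gcongr
  refine (norm_add_le _ _).trans (le_of_eq ?_)
  rw [norm_smul, norm_smul]
  norm_num
  ring

/-- If `x` attains norm one on the finite set `B`, some functional norms `x` and is small at every
`y` of the unit ball which stays below `x / 2` on `B`. -/
theorem exists_norming (hb : IsUncondBasis e f) (x : X) (B : Finset ℕ)
    (hB : ‖∑ i ∈ B, f i x • e i‖ = 1) :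
    ∃ g : X →L[ℝ] ℝ, g x = 1 ∧ (∀ y, g y ≤ ‖y‖) ∧
      ∀ y, (∀ i ∈ B, f i y * f i x < f i x ^ 2 / 2) → g y ≤ 1 / 2 := by
  obtain ⟨φ, hφ, hφB⟩ := exists_dual_vector'' ℝ (∑ i ∈ B, f i x • e i)
  have hle (z : X) : φ z ≤ ‖z‖ :=
    (le_abs_self _).trans ((φ.le_opNorm z).trans (mul_le_of_le_one_left (norm_nonneg z) hφ))
  have happly (y : X) : (∑ i ∈ B, φ (e i) • f i) y = φ (∑ i ∈ B, f i y • e i) := by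
    simp [map_sum, mul_comm]
  have hx : φ (∑ i ∈ B, f i x • e i) = 1 := by simp [hφB, hB]
  refine ⟨∑ i ∈ B, φ (e i) • f i, by rw [happly, hx], fun y => ?_, fun y hy => ?_⟩
  · rw [happly]
    refine (hle _).trans (hb.norm_mono fun i => ?_)
    rw [hb.coord_sum B (fun i => f i y)]
    split_ifs <;> simp
  · have hpos (i : ℕ) (hi : i ∈ B) : 0 ≤ φ (e i) * f i x := by
      have hcoord : f i (∑ j ∈ B, f j x • e j) = f i x := by
        rw [hb.coord_sum B (fun i => f i x), if_pos hi]
      have hflip := hb.norm_update_le (∑ j ∈ B, f j x • e j) i (-f i x) (by simp [hcoord])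
      have hφflip := (hle _).trans hflip
      rw [hB, map_add, hx, map_smul, hcoord, smul_eq_mul] at hφflip
      linarith
    have hterm : φ (∑ i ∈ B, f i y • e i) ≤ ∑ i ∈ B, φ (e i) * f i x / 2 := by
      rw [map_sum]
      refine Finset.sum_le_sum fun i hi => ?_
      have hxi : 0 < f i x ^ 2 := by
        rcases eq_or_ne (f i x) 0 with h0 | h0
        · simpa [h0] using hy i hi
        · positivity
      rw [map_smul, smul_eq_mul]
      refine le_of_mul_le_mul_right ?_ hxi
      nlinarith [mul_le_mul_of_nonneg_left (hy i hi).le (hpos i hi)]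
    rw [happly]
    refine hterm.trans (le_of_eq ?_)
    rw [← Finset.sum_div, ← hx, map_sum]
    simp [mul_comm]

end IsUncondBasis

namespace IsSubsymmetricBasis

variable {e : ℕ → X} {f : ℕ → X →L[ℝ] ℝ}

theorem norm_add_smul_spread (hb : IsSubsymmetricBasis e f) {W y : X} {k : ℕ → ℕ}
    (hk : StrictMono k) (hy : HasSum (fun i => f i W • e (k i)) y) (c : ℝ) (i : ℕ) :
    ‖y + c • e (k i)‖ = ‖W + c • e i‖ := by
  obtain ⟨z, hz, hzW⟩ := hb.subsym (W + c • e i) (fun _ => 1) k (fun _ => Or.inl rfl) hk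
  rw [← hzW]
  congr 1
  refine HasSum.unique ?_ hz
  convert hy.add (hasSum_ite_eq i (c • e (k i))) using 2 with j
  by_cases hj : j = i
  · subst hj; simp [hb.biorth, add_smul]
  · simp [hb.biorth, hj]

/-- A coordinate can be moved across a gap of the support. -/
theorem norm_add_smul_eq (hb : IsSubsymmetricBasis e f) {W : X} {i j : ℕ} (hij : i ≤ j)
    (hW : ∀ l, i ≤ l → l ≤ j → f l W = 0) (c : ℝ) :
    ‖W + c • e j‖ = ‖W + c • e i‖ := by
  let k : ℕ → ℕ := fun l => if l < i then l else l + (j - i)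
  let k' : ℕ → ℕ := fun l => if l ≤ j then l else l + (j - i)
  have hk : StrictMono k := fun a b hab => by simp only [k]; split_ifs <;> omega
  have hk' : StrictMono k' := fun a b hab => by simp only [k']; split_ifs <;> omega
  obtain ⟨y, hy, -⟩ := hb.subsym W (fun _ => 1) k (fun _ => Or.inl rfl) hk
  simp only [one_smul] at hy
  have hy' : HasSum (fun l => f l W • e (k' l)) y := by
    convert hy using 2 with l
    by_cases hl : i ≤ l ∧ l ≤ j
    · simp [hW l hl.1 hl.2]
    · congr 2
      simp only [k, k']
      split_ifs <;> omega
  have hi : k i = j := by simp only [k]; split_ifs <;> omega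
  have hj : k' j = j := by simp [k']
  have h := hb.norm_add_smul_spread hk hy c i
  have h' := hb.norm_add_smul_spread hk' hy' c j
  rw [hi] at h
  rw [hj] at h'
  rw [← h, ← h']

/-- If the coordinate `i` dominates all later ones and `x` attains its norm on `B ∪ (i, ∞)` with
`B ⊆ [0, i)`, then `x` attains its norm on `B`. -/
theorem norm_head_eq (hb : IsSubsymmetricBasis e f) {x : X} (hx : ‖x‖ = 1) {i : ℕ}
    (hi : ∀ j, i < j → |f j x| < |f i x|) {B : Finset ℕ} (hB : ∀ l ∈ B, l < i)
    (h : ‖headTail e f x B (i + 1)‖ = 1) : ‖∑ l ∈ B, f l x • e l‖ = 1 := by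
  have hall (n : ℕ) : ‖headTail e f x B (i + 1 + n)‖ = 1 := by
    induction n with
    | zero => exact h
    | succ n ih =>
      set j := i + 1 + n with hj
      have hBj (m : ℕ) (hm : i ≤ m) : ∀ l ∈ B, l < m := fun l hl => (hB l hl).trans_le hm
      set W := headTail e f x B (j + 1) with hWdef
      have hcoord (l : ℕ) : f l W = if l ∈ B ∨ j + 1 ≤ l then f l x else 0 :=
        hb.coord_headTail x (hBj _ (by omega)) l
      have hgap (l : ℕ) (h1 : i ≤ l) (h2 : l ≤ j) : f l W = 0 := by
        rw [hcoord, if_neg]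
        rintro (hl | hl)
        · exact absurd (hB l hl) (not_lt.mpr h1)
        · omega
      have hpos : 0 < |f i x| := (abs_nonneg _).trans_lt (hi j (by omega))
      have hmoved : ‖W + |f i x| • e j‖ ≤ 1 := by
        rw [hb.norm_add_smul_eq (by omega) hgap, ← hx]
        refine hb.norm_mono fun l => ?_
        rw [map_add, map_smul, hb.biorth, smul_eq_mul]
        by_cases hl : l = i
        · subst hl
          simp [hgap l le_rfl (by omega)]
        · rw [hcoord]
          split_ifs <;> simp
      have hW1 : ‖W‖ ≤ 1 := by
        rw [← hx]
        refine hb.norm_mono fun l => ?_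
        rw [hcoord]
        split_ifs <;> simp
      have hUle : 1 ≤ ‖W + |f j x| • e j‖ := by
        rw [← ih]
        refine hb.norm_mono fun l => ?_
        rw [hb.coord_headTail x (hBj _ (by omega)), map_add, map_smul, hb.biorth, smul_eq_mul]
        by_cases hl : l = j
        · rw [hl, hgap j (by omega) le_rfl]
          simp
        · rw [hcoord]
          by_cases hlB : l ∈ B
          · simp [hlB, hl]
          · have : j ≤ l ↔ j + 1 ≤ l := by omega
            simp [hlB, hl, this]
      obtain ⟨t, ht⟩ : ∃ t, |f j x| = t * |f i x| := ⟨|f j x| / |f i x|, by field_simp⟩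
      have hlt := hi j (by omega)
      have ht0 : 0 ≤ t := by
        have := abs_nonneg (f j x)
        rw [ht] at this
        exact nonneg_of_mul_nonneg_left this hpos
      have ht1 : t < 1 := by
        rw [ht] at hlt
        exact lt_of_mul_lt_mul_right (by linarith) hpos.le
      have hconv : W + |f j x| • e j = (1 - t) • W + t • (W + |f i x| • e j) := by
        rw [ht]
        module
      have hnorm : ‖W + |f j x| • e j‖ ≤ (1 - t) * ‖W‖ + t * ‖W + |f i x| • e j‖ := by
        rw [hconv]
        refine (norm_add_le _ _).trans (le_of_eq ?_)
        rw [norm_smul, norm_smul, Real.norm_of_nonneg (by linarith), Real.norm_of_nonneg ht0]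
      change ‖W‖ = 1
      nlinarith
  have hlim := ((hb.tendsto_headTail x B).comp
    (Filter.tendsto_add_atTop_nat (i + 1))).norm
  refine tendsto_nhds_unique hlim ?_
  convert tendsto_const_nhds using 2 with n
  simpa [add_comm] using hall n

end IsSubsymmetricBasis

/-- A Banach space with a normalized subsymmetric basis has no delta-points. -/
theorem no_deltaPoint_of_subsymmetric [CompleteSpace X] (e : ℕ → X) (f : ℕ → X →L[ℝ] ℝ)
    (hb : IsSubsymmetricBasis e f) (x : X) (hx : ‖x‖ = 1) : ¬ IsDeltaPoint x := by
  classical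
  obtain ⟨n, hn⟩ := hb.exists_dominating_coord (x := x) (by rintro rfl; simp at hx)
  have hpos : 0 < |f n x| := (abs_nonneg _).trans_lt (hn (n + 1) (by omega))
  obtain ⟨ε, hε, hεpos⟩ : ∃ ε : ℝ, (∀ B ∈ (Finset.range n).powerset,
      ‖headTail e f x B (n + 1)‖ < 1 → ‖headTail e f x B (n + 1)‖ < 1 - 2 * ε) ∧ 0 < ε := by
    have hev : ∀ᶠ ε : ℝ in nhdsWithin 0 (Set.Ioi 0), ∀ B ∈ (Finset.range n).powerset,
        ‖headTail e f x B (n + 1)‖ < 1 → ‖headTail e f x B (n + 1)‖ < 1 - 2 * ε := by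
      rw [Filter.eventually_all_finset]
      intro B _
      by_cases hlt : ‖headTail e f x B (n + 1)‖ < 1
      · have hcont : Filter.Tendsto (fun ε : ℝ => 1 - 2 * ε) (nhds 0) (nhds (1 - 2 * 0)) :=
          Continuous.tendsto (by fun_prop) 0
        filter_upwards [(hcont.mono_left nhdsWithin_le_nhds).eventually_const_lt
          (by simpa using hlt)] with ε h _ using h
      · exact Filter.Eventually.of_forall fun _ h => absurd h hlt
    exact (hev.and self_mem_nhdsWithin).exists
  let 𝓑 := (Finset.range n).powerset.filter fun B => ‖∑ i ∈ B, f i x • e i‖ = 1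
  have hnorming : ∀ B : Finset ℕ, ∃ g : X →L[ℝ] ℝ, B ∈ 𝓑 → g x = 1 ∧ (∀ y, g y ≤ ‖y‖) ∧
      ∀ y, (∀ i ∈ B, f i y * f i x < f i x ^ 2 / 2) → g y ≤ 1 / 2 := fun B => by
    by_cases hB : B ∈ 𝓑
    · obtain ⟨g, hg⟩ := hb.exists_norming x B (Finset.mem_filter.mp hB).2
      exact ⟨g, fun _ => hg⟩
    · exact ⟨0, fun h => absurd h hB⟩
  choose g hg using hnorming
  let H : X →L[ℝ] ℝ := (2 * |f n x|) • (∑ B ∈ 𝓑, g B) + f n x • f n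
  let a : ℝ := 2 * |f n x| * 𝓑.card + f n x ^ 2 / 2
  have hsq : 0 < f n x ^ 2 := by rw [← sq_abs]; positivity
  have hHx : a < H x := by
    have hsum : ∑ B ∈ 𝓑, g B x = 𝓑.card := by
      rw [Finset.sum_congr rfl fun B hB => (hg B hB).1]
      simp
    simp only [H, a, add_apply, smul_apply, sum_apply, smul_eq_mul, hsum]
    nlinarith
  have hHy : ∀ y ∈ deltaSet x ε, H y ≤ a := by
    rintro y ⟨hy1, hy2⟩
    have hle (B : Finset ℕ) (hB : B ∈ 𝓑) : g B y ≤ 1 := ((hg B hB).2.1 y).trans hy1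
    simp only [H, a, add_apply, smul_apply, sum_apply, smul_eq_mul]
    by_cases hyn : f n y * f n x < f n x ^ 2 / 2
    · have hsum : ∑ B ∈ 𝓑, g B y ≤ 𝓑.card := by
        simpa using Finset.sum_le_sum hle
      have := mul_le_mul_of_nonneg_left hsum (by positivity : 0 ≤ 2 * |f n x|)
      nlinarith
    · let B := (Finset.range n).filter fun i => f i y * f i x < f i x ^ 2 / 2
      have hBn : ∀ i ∈ B, i < n := fun i hi => Finset.mem_range.mp (Finset.mem_filter.mp hi).1
      have hBpow : B ∈ (Finset.range n).powerset :=
        Finset.mem_powerset.mpr (Finset.filter_subset _ _)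
      have hdist := hb.norm_sub_le_headTail x y (B := B) (n := n + 1)
        (fun i hi => (hBn i hi).trans (Nat.lt_succ_self n)) fun i hi hiB => by
          rcases Nat.lt_succ_iff_lt_or_eq.mp hi with h | rfl
          · by_contra hlt
            exact hiB (Finset.mem_filter.mpr ⟨Finset.mem_range.mpr h, not_le.mp hlt⟩)
          · exact not_lt.mp hyn
      have hle1 : ‖headTail e f x B (n + 1)‖ ≤ 1 := by
        rw [← hx]
        refine hb.norm_mono fun i => ?_
        rw [hb.coord_headTail x fun i hi => (hBn i hi).trans (Nat.lt_succ_self n)]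
        split_ifs <;> simp
      have heq : ‖headTail e f x B (n + 1)‖ = 1 := by
        refine hle1.eq_of_not_lt fun hlt => ?_
        have := hε B hBpow hlt
        linarith
      have hB𝓑 : B ∈ 𝓑 := Finset.mem_filter.mpr ⟨hBpow, hb.norm_head_eq hx hn hBn heq⟩
      have hhalf : g B y ≤ 1 / 2 := (hg B hB𝓑).2.2 y fun i hi => (Finset.mem_filter.mp hi).2
      have hrest : ∑ C ∈ 𝓑.erase B, g C y ≤ (𝓑.erase B).card := by
        simpa using Finset.sum_le_sum fun C hC => hle C (Finset.mem_of_mem_erase hC)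
      have hcard : ((𝓑.erase B).card : ℝ) + 1 = 𝓑.card := by
        exact_mod_cast Finset.card_erase_add_one hB𝓑
      have hsum : ∑ C ∈ 𝓑, g C y ≤ 𝓑.card - 1 / 2 := by
        rw [← Finset.add_sum_erase _ _ hB𝓑]
        linarith
      have hfn : f n x * f n y ≤ |f n x| := by
        refine (le_abs_self _).trans ?_
        rw [abs_mul]
        exact mul_le_of_le_one_right (abs_nonneg _) ((hb.abs_coord_le y n).trans hy1)
      have := mul_le_mul_of_nonneg_left hsum (by positivity : 0 ≤ 2 * |f n x|)
      linarith
  intro hdelta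
  have hclosed : IsClosed {z | H z ≤ a} := isClosed_le H.continuous continuous_const
  have hconvex : Convex ℝ {z | H z ≤ a} := convex_halfSpace_le H.toLinearMap.isLinear a
  exact absurd (closure_minimal (convexHull_min hHy hconvex) hclosed (hdelta ε hεpos))
    (not_le.mpr hHx)
end
end
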